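/- Assume λ, μ ∈ ℂ \ ℤ. Then F(λ/z, μ/z) is irreducible: the only ℂ-subspaces of F invariant under all operators G⁺(i−1/2) = (λ−i)Ψ⁺(i−1/2) and G⁻(i−1/2) = (μ−i)Ψ⁻(i−1/2), i ∈ ℤ, are {0} and F. -/

import Mathlib

noncomputable section

/-- The fermionic Fock space `F`: it has basis indexed by pairs `(A, B)` of finite sets of
nonnegative integers, the pair `(A, B)` corresponding to the basis monomial
`Ψ⁺(−n₁−1/2)⋯Ψ⁺(−n_r−1/2)·Ψ⁻(−k₁−1/2)⋯Ψ⁻(−k_s−1/2)·𝟙` where `A = {n₁ > ⋯ > n_r}` and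
`B = {k₁ > ⋯ > k_s}`. -/
abbrev FockF : Type := (Finset ℕ × Finset ℕ) →₀ ℂ

/-- The vacuum vector `𝟙`. -/
def vac : FockF := Finsupp.single (∅, ∅) 1

/-- `(−1)^{#{a ∈ S : a > m}}`. -/
def sgn (S : Finset ℕ) (m : ℕ) : ℂ := (-1 : ℂ) ^ (S.filter fun a => m < a).card

/-- `Ψ⁺(−m−1/2)`: exterior multiplication (creation). -/
def psiPneg (m : ℕ) : Module.End ℂ FockF :=
  Finsupp.lsum ℂ fun AB : Finset ℕ × Finset ℕ => LinearMap.toSpanSingleton ℂ FockF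
    (if m ∈ AB.1 then 0 else sgn AB.1 m • Finsupp.single (insert m AB.1, AB.2) 1)

/-- `Ψ⁺(m+1/2)`: the odd contraction operator pairing with `Ψ⁻(−m−1/2)` (annihilation). -/
def psiPpos (m : ℕ) : Module.End ℂ FockF :=
  Finsupp.lsum ℂ fun AB : Finset ℕ × Finset ℕ => LinearMap.toSpanSingleton ℂ FockF
    (if m ∈ AB.2 then ((-1 : ℂ) ^ AB.1.card * sgn AB.2 m) • Finsupp.single (AB.1, AB.2.erase m) 1
     else 0)

/-- `Ψ⁻(−m−1/2)`: exterior multiplication (creation). -/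
def psiMneg (m : ℕ) : Module.End ℂ FockF :=
  Finsupp.lsum ℂ fun AB : Finset ℕ × Finset ℕ => LinearMap.toSpanSingleton ℂ FockF
    (if m ∈ AB.2 then 0
     else ((-1 : ℂ) ^ AB.1.card * sgn AB.2 m) • Finsupp.single (AB.1, insert m AB.2) 1)

/-- `Ψ⁻(m+1/2)`: the odd contraction operator pairing with `Ψ⁺(−m−1/2)` (annihilation). -/
def psiMpos (m : ℕ) : Module.End ℂ FockF :=
  Finsupp.lsum ℂ fun AB : Finset ℕ × Finset ℕ => LinearMap.toSpanSingleton ℂ FockF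
    (if m ∈ AB.1 then sgn AB.1 m • Finsupp.single (AB.1.erase m, AB.2) 1 else 0)

/-- `PsiP i` is the operator `Ψ⁺(i − 1/2)`, `i ∈ ℤ`. -/
def PsiP (i : ℤ) : Module.End ℂ FockF :=
  if i ≤ 0 then psiPneg (-i).toNat else psiPpos (i - 1).toNat

/-- `PsiM i` is the operator `Ψ⁻(i − 1/2)`, `i ∈ ℤ`. -/
def PsiM (i : ℤ) : Module.End ℂ FockF :=
  if i ≤ 0 then psiMneg (-i).toNat else psiMpos (i - 1).toNat

/-- `G⁺(i−1/2) = (λ − i)·Ψ⁺(i−1/2)`. -/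
def Gplus (lam : ℂ) (i : ℤ) : Module.End ℂ FockF := (lam - (i : ℂ)) • PsiP i

/-- The finite set of indices `k ≥ −p` for which `Ψ⁻(k+i−1/2)` can act nontrivially on the
basis monomial `AB`; outside of it all terms of the locally finite sum defining `G⁻` vanish. -/
def GminusIdx (p : ℕ) (i : ℤ) (AB : Finset ℕ × Finset ℕ) : Finset ℤ :=
  (Finset.Icc (-(p : ℤ)) (-i) ∪ AB.1.image fun a : ℕ => (a : ℤ) + 1 - i).filter
    fun k => -(p : ℤ) ≤ k

/-- `G⁻(i−1/2) = −i·Ψ⁻(i−1/2) + Σ_{k=−p}^∞ χ_{−k}·Ψ⁻(k+i−1/2)` (a locally finite sum). -/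
def Gminus (p : ℕ) (χ : ℤ → ℂ) (i : ℤ) : Module.End ℂ FockF :=
  (-(i : ℂ)) • PsiM i +
    Finsupp.lsum ℂ fun AB : Finset ℕ × Finset ℕ => LinearMap.toSpanSingleton ℂ FockF
      (∑ k ∈ GminusIdx p i AB, χ (-k) • PsiM (k + i) (Finsupp.single AB 1))

end

/-!
The operators `Ψ±(r)` preserve the same subspaces as their nonzero multiples `G±(r)`, so it suffices
that the Clifford module `F` is irreducible. The number operators `Ψ⁺(−m−1/2)Ψ⁻(m+1/2)` and
`Ψ⁻(−m−1/2)Ψ⁺(m+1/2)` are commuting projections whose joint eigenspaces are the lines spanned by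
the basis monomials, so a nonzero invariant subspace contains a basis monomial; creation and
annihilation operators then lead from it to all the others.
-/

open Finsupp (single)
open Module.End (invtSubmodule)

section FilterInvariant

variable {α : Type*}

theorem single_apply_mem_of_separating_filters {M : Type*} [AddCommGroup M]
    {U : AddSubgroup (α →₀ M)}
    (hsep : ∀ x y, x ≠ y → ∃ (p : α → Prop) (_ : DecidablePred p),
      (∀ v ∈ U, v.filter p ∈ U) ∧ ¬(p x ↔ p y))
    {v : α →₀ M} (hv : v ∈ U) (x : α) : single x (v x) ∈ U := by
  induction hn : v.support.card using Nat.strong_induction_on generalizing v with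
  | _ n ih =>
    have mem_of_filter (q : α → Prop) [DecidablePred q] (hq : v.filter q ∈ U) (hx : q x) {y : α}
        (hy : y ∈ v.support) (hqy : ¬q y) : single x (v x) ∈ U := by
      have hlt : (v.filter q).support.card < n := by
        rw [← hn, Finsupp.support_filter]
        exact Finset.card_lt_card (Finset.filter_ssubset.2 ⟨y, hy, hqy⟩)
      simpa only [Finsupp.filter_apply_pos q v hx] using ih _ hlt hq rfl
    by_cases hsupp : v.support ⊆ {x}
    · rwa [← Finsupp.support_subset_singleton.1 hsupp]
    · obtain ⟨y, hy, hyx⟩ : ∃ y ∈ v.support, y ≠ x := by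
        simpa only [Finset.not_subset, Finset.mem_singleton] using hsupp
      obtain ⟨p, _, hp, hpxy⟩ := hsep x y hyx.symm
      by_cases hpx : p x
      · exact mem_of_filter p (hp v hv) hpx hy (by tauto)
      · have hfilter_not : v.filter (fun a => ¬p a) ∈ U := by
          rw [eq_sub_of_add_eq' (Finsupp.filter_add_filter_not v p)]
          exact U.sub_mem hv (hp v hv)
        exact mem_of_filter _ hfilter_not hpx hy (by tauto)

theorem eq_bot_or_eq_top_of_separating_filters {K : Type*} [DivisionRing K]
    {U : Submodule K (α →₀ K)}
    (hsep : ∀ x y, x ≠ y → ∃ (p : α → Prop) (_ : DecidablePred p),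
      (∀ v ∈ U, v.filter p ∈ U) ∧ ¬(p x ↔ p y))
    (hsingle : ∀ x y, single x 1 ∈ U → single y 1 ∈ U) : U = ⊥ ∨ U = ⊤ := by
  refine or_iff_not_imp_left.2 fun hU => ?_
  obtain ⟨v, hv, hv0⟩ := U.ne_bot_iff.1 hU
  obtain ⟨x, hx⟩ := Finsupp.ne_iff.1 hv0
  have hvx : single x (v x) ∈ U :=
    single_apply_mem_of_separating_filters (U := U.toAddSubgroup) hsep hv x
  rw [← Finsupp.smul_single_one, U.smul_mem_iff hx] at hvx
  rw [eq_top_iff, ← Finsupp.basisSingleOne.span_eq, Submodule.span_le]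
  rintro _ ⟨y, rfl⟩
  simpa using hsingle x y hvx

end FilterInvariant

theorem iff_of_forall_insert_iff {α : Type*} [DecidableEq α] {p : Finset α → Prop}
    (h : ∀ a s, a ∉ s → (p (insert a s) ↔ p s)) (s t : Finset α) : p s ↔ p t := by
  have iff_empty (s : Finset α) : p s ↔ p ∅ := by
    induction s using Finset.induction_on with
    | empty => rfl
    | insert a s ha ih => exact (h a s ha).trans ih
  exact (iff_empty s).trans (iff_empty t).symm

theorem sgn_mul_self (S : Finset ℕ) (m : ℕ) : sgn S m * sgn S m = 1 := by
  rw [sgn, ← mul_pow, neg_one_mul, neg_neg, one_pow]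

theorem sgn_ne_zero (S : Finset ℕ) (m : ℕ) : sgn S m ≠ 0 :=
  left_ne_zero_of_mul_eq_one (sgn_mul_self S m)

theorem sgn_insert_self (S : Finset ℕ) (m : ℕ) : sgn (insert m S) m = sgn S m := by
  rw [sgn, Finset.filter_insert, if_neg (lt_irrefl m), ← sgn]

theorem neg_one_pow_mul_sgn_mul_self (n : ℕ) (S : Finset ℕ) (m : ℕ) :
    (-1) ^ n * sgn S m * ((-1) ^ n * sgn S m) = 1 := by
  rw [mul_mul_mul_comm, sgn_mul_self, mul_one, ← mul_pow, neg_one_mul, neg_neg, one_pow]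

theorem neg_one_pow_mul_sgn_ne_zero (n : ℕ) (S : Finset ℕ) (m : ℕ) : (-1) ^ n * sgn S m ≠ 0 :=
  left_ne_zero_of_mul_eq_one (neg_one_pow_mul_sgn_mul_self n S m)

section BasisAction

variable {m : ℕ} {A B : Finset ℕ}

theorem psiPneg_single_of_notMem (h : m ∉ A) (c : ℂ) :
    psiPneg m (single (A, B) c) = sgn A m • single (insert m A, B) c := by
  simp [psiPneg, h, mul_comm]

theorem psiMpos_single_insert (h : m ∉ A) (c : ℂ) :
    psiMpos m (single (insert m A, B) c) = sgn A m • single (A, B) c := by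
  simp [psiMpos, h, sgn_insert_self, mul_comm]

theorem psiMpos_single_of_notMem (h : m ∉ A) (c : ℂ) : psiMpos m (single (A, B) c) = 0 := by
  simp [psiMpos, h]

theorem psiMneg_single_of_notMem (h : m ∉ B) (c : ℂ) :
    psiMneg m (single (A, B) c) = ((-1) ^ A.card * sgn B m) • single (A, insert m B) c := by
  simp [psiMneg, h, mul_comm, -Finsupp.single_mul]

theorem psiPpos_single_insert (h : m ∉ B) (c : ℂ) :
    psiPpos m (single (A, insert m B) c) = ((-1) ^ A.card * sgn B m) • single (A, B) c := by
  simp [psiPpos, h, sgn_insert_self, mul_comm, -Finsupp.single_mul]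

theorem psiPpos_single_of_notMem (h : m ∉ B) (c : ℂ) : psiPpos m (single (A, B) c) = 0 := by
  simp [psiPpos, h]

end BasisAction

theorem psiPneg_psiMpos (m : ℕ) (v : FockF) :
    psiPneg m (psiMpos m v) = v.filter fun AB => m ∈ AB.1 := by
  induction v using Finsupp.induction_linear with
  | zero => simp only [map_zero, Finsupp.filter_zero]
  | add v w hv hw => simp only [map_add, hv, hw, Finsupp.filter_add]
  | single AB c =>
    obtain ⟨A, B⟩ := AB
    by_cases h : m ∈ A
    · obtain ⟨A, hA, rfl⟩ : ∃ A', m ∉ A' ∧ insert m A' = A :=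
        ⟨A.erase m, Finset.notMem_erase m A, Finset.insert_erase h⟩
      rw [psiMpos_single_insert hA, map_smul, psiPneg_single_of_notMem hA, smul_smul,
        sgn_mul_self, one_smul]
      exact Eq.symm (Finsupp.filter_single_of_pos _ h)
    · rw [psiMpos_single_of_notMem h, map_zero]
      exact Eq.symm (Finsupp.filter_single_of_neg _ h)

theorem psiMneg_psiPpos (m : ℕ) (v : FockF) :
    psiMneg m (psiPpos m v) = v.filter fun AB => m ∈ AB.2 := by
  induction v using Finsupp.induction_linear with
  | zero => simp only [map_zero, Finsupp.filter_zero]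
  | add v w hv hw => simp only [map_add, hv, hw, Finsupp.filter_add]
  | single AB c =>
    obtain ⟨A, B⟩ := AB
    by_cases h : m ∈ B
    · obtain ⟨B, hB, rfl⟩ : ∃ B', m ∉ B' ∧ insert m B' = B :=
        ⟨B.erase m, Finset.notMem_erase m B, Finset.insert_erase h⟩
      rw [psiPpos_single_insert hB, map_smul, psiMneg_single_of_notMem hB, smul_smul,
        neg_one_pow_mul_sgn_mul_self, one_smul]
      exact Eq.symm (Finsupp.filter_single_of_pos _ h)
    · rw [psiPpos_single_of_notMem h, map_zero]
      exact Eq.symm (Finsupp.filter_single_of_neg _ h)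

theorem PsiP_neg_natCast (m : ℕ) : PsiP (-m) = psiPneg m := by
  simp [PsiP]

theorem PsiP_natCast_add_one (m : ℕ) : PsiP (m + 1) = psiPpos m := by
  rw [PsiP, if_neg (by lia), add_sub_cancel_right, Int.toNat_natCast]

theorem PsiM_neg_natCast (m : ℕ) : PsiM (-m) = psiMneg m := by
  simp [PsiM]

theorem PsiM_natCast_add_one (m : ℕ) : PsiM (m + 1) = psiMpos m := by
  rw [PsiM, if_neg (by lia), add_sub_cancel_right, Int.toNat_natCast]

section Irreducibility

variable {U : Submodule ℂ FockF} {m : ℕ} {A B : Finset ℕ}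

theorem single_insert_fst_mem_iff (hcreate : U ∈ invtSubmodule (psiPneg m))
    (hannihilate : U ∈ invtSubmodule (psiMpos m)) (hm : m ∉ A) (c : ℂ) :
    single (insert m A, B) c ∈ U ↔ single (A, B) c ∈ U where
  mp h := by
    rw [← U.smul_mem_iff (sgn_ne_zero A m), ← psiMpos_single_insert hm]
    exact hannihilate h
  mpr h := by
    rw [← U.smul_mem_iff (sgn_ne_zero A m), ← psiPneg_single_of_notMem hm]
    exact hcreate h

theorem single_insert_snd_mem_iff (hcreate : U ∈ invtSubmodule (psiMneg m))
    (hannihilate : U ∈ invtSubmodule (psiPpos m)) (hm : m ∉ B) (c : ℂ) :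
    single (A, insert m B) c ∈ U ↔ single (A, B) c ∈ U where
  mp h := by
    rw [← U.smul_mem_iff (neg_one_pow_mul_sgn_ne_zero A.card B m), ← psiPpos_single_insert hm]
    exact hannihilate h
  mpr h := by
    rw [← U.smul_mem_iff (neg_one_pow_mul_sgn_ne_zero A.card B m), ← psiMneg_single_of_notMem hm]
    exact hcreate h

theorem FockF.eq_bot_or_eq_top_of_invariant (hP : ∀ i, U ∈ invtSubmodule (PsiP i))
    (hM : ∀ i, U ∈ invtSubmodule (PsiM i)) : U = ⊥ ∨ U = ⊤ := by
  have hPneg (m : ℕ) : U ∈ invtSubmodule (psiPneg m) := PsiP_neg_natCast m ▸ hP (-m)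
  have hPpos (m : ℕ) : U ∈ invtSubmodule (psiPpos m) := PsiP_natCast_add_one m ▸ hP (m + 1)
  have hMneg (m : ℕ) : U ∈ invtSubmodule (psiMneg m) := PsiM_neg_natCast m ▸ hM (-m)
  have hMpos (m : ℕ) : U ∈ invtSubmodule (psiMpos m) := PsiM_natCast_add_one m ▸ hM (m + 1)
  refine eq_bot_or_eq_top_of_separating_filters ?separating ?connected
  case separating =>
    intro x y hxy
    by_cases hfst : x.1 = y.1
    · have hsnd : ¬x.2 = y.2 := fun h => hxy (Prod.ext hfst h)
      obtain ⟨m, hm⟩ : ∃ m, ¬(m ∈ x.2 ↔ m ∈ y.2) := by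
        simpa only [Finset.ext_iff, not_forall] using hsnd
      exact ⟨fun AB => m ∈ AB.2, inferInstance,
        fun v hv => psiMneg_psiPpos m v ▸ hMneg m (hPpos m hv), hm⟩
    · obtain ⟨m, hm⟩ : ∃ m, ¬(m ∈ x.1 ↔ m ∈ y.1) := by
        simpa only [Finset.ext_iff, not_forall] using hfst
      exact ⟨fun AB => m ∈ AB.1, inferInstance,
        fun v hv => psiPneg_psiMpos m v ▸ hPneg m (hMpos m hv), hm⟩
  case connected =>
    rintro ⟨A, B⟩ ⟨A', B'⟩ hAB
    have hA'B : single (A', B) 1 ∈ U :=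
      (iff_of_forall_insert_iff (p := fun S => single (S, B) 1 ∈ U)
        (fun m _ hm => single_insert_fst_mem_iff (hPneg m) (hMpos m) hm 1) A A').1 hAB
    exact (iff_of_forall_insert_iff (p := fun S => single (A', S) 1 ∈ U)
      (fun m _ hm => single_insert_snd_mem_iff (hMneg m) (hPpos m) hm 1) B B').1 hA'B

end Irreducibility

/-- If `λ, μ ∈ ℂ \ ℤ` then `F(λ/z, μ/z)` is irreducible: the only
`ℂ`-subspaces of `F` invariant under all the operators `G⁺(i−1/2) = (λ−i)Ψ⁺(i−1/2)` and
`G⁻(i−1/2) = (μ−i)Ψ⁻(i−1/2)`, `i ∈ ℤ`, are `{0}` and `F`. -/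
theorem statement4 (lam mu : ℂ) (hlam : ∀ n : ℤ, lam ≠ (n : ℂ)) (hmu : ∀ n : ℤ, mu ≠ (n : ℂ))
    (U : Submodule ℂ FockF)
    (hU : ∀ i : ℤ, ∀ v ∈ U,
      ((lam - (i : ℂ)) • PsiP i) v ∈ U ∧ ((mu - (i : ℂ)) • PsiM i) v ∈ U) :
    U = ⊥ ∨ U = ⊤ :=
  FockF.eq_bot_or_eq_top_of_invariant
    (fun i v hv => (U.smul_mem_iff (sub_ne_zero.2 (hlam i))).1 (hU i v hv).1)
    (fun i v hv => (U.smul_mem_iff (sub_ne_zero.2 (hmu i))).1 (hU i v hv).2)
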